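/- Let T be a deterministic database of n transactions t_1,…,t_n over a finite item set I, let X ⊆ I be a nonempty itemset, and let w : I → ℝ assign a private weight to each item (items outside the checkset X are given weight 1, so each transaction t is replicated with weight ∏_{x ∈ t ∩ X} w_x in the virtually transformed database T'). Then the weighted count checker on T' can be computed from the original supports: Σ_{i : t_i ∩ X ≠ ∅} ∏_{x ∈ t_i ∩ X} w_x = Σ_{∅ ≠ Y ⊆ X} ( Σ_{∅ ≠ Z ⊆ Y} (−1)^{|Y| − |Z|} ∏_{z ∈ Z} w_z ) · sup(Y), where sup(Y) = #{i : Y ⊆ t_i}. -/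

import Mathlib

/-! For any function `f` of itemsets, Möbius inversion on the Boolean lattice writes `f (t i ∩ X)`
as a sum over the nonempty `Y ⊆ t i ∩ X` of coefficients that depend on `Y` alone. Summed over all
transactions, the coefficient of `Y ⊆ X` occurs once for every `i` with `Y ⊆ t i`, hence `sup(Y)`
times. The checker is the case `f Z = ∏ z ∈ Z, w z`. -/

section

open Finset

variable {ι α M G : Type*} [AddCommMonoid M] [AddCommGroup G]

lemma sum_Icc_neg_one_pow_card_sub [DecidableEq α] {Z S : Finset α} (hZS : Z ⊆ S) :
    ∑ Y ∈ Icc Z S, (-1 : ℤ) ^ (#Y - #Z) = if Z = S then 1 else 0 := by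
  have disjoint_of_mem {V : Finset α} (hV : V ∈ (S \ Z).powerset) : Disjoint Z V :=
    disjoint_sdiff.mono_right (mem_powerset.1 hV)
  have union_injOn : Set.InjOn (Z ∪ ·) ((S \ Z).powerset : Set (Finset α)) := fun V hV W hW h ↦ by
    simpa only [union_sdiff_cancel_left (disjoint_of_mem hV),
      union_sdiff_cancel_left (disjoint_of_mem hW)] using congrArg (· \ Z) h
  calc
    ∑ Y ∈ Icc Z S, (-1 : ℤ) ^ (#Y - #Z)
      = ∑ V ∈ (S \ Z).powerset, (-1) ^ (#(Z ∪ V) - #Z) := by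
        rw [Icc_eq_image_powerset hZS, sum_image union_injOn]
    _ = ∑ V ∈ (S \ Z).powerset, (-1) ^ #V := sum_congr rfl fun V hV ↦ by
        rw [card_union_of_disjoint (disjoint_of_mem hV), Nat.add_sub_cancel_left]
    _ = if Z = S then 1 else 0 := by
        simp only [sum_powerset_neg_one_pow_card, sdiff_eq_empty_iff_subset, hZS.ge_iff_eq]

lemma moebius_inversion_powerset_filter {p : Finset α → Prop} [DecidablePred p] (hp : Monotone p)
    (f : Finset α → G) (S : Finset α) :
    ∑ Y ∈ S.powerset with p Y, ∑ Z ∈ Y.powerset with p Z, (-1 : ℤ) ^ (#Y - #Z) • f Z =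
      if p S then f S else 0 := by
  classical
  calc
    ∑ Y ∈ S.powerset with p Y, ∑ Z ∈ Y.powerset with p Z, (-1 : ℤ) ^ (#Y - #Z) • f Z
      = ∑ Z ∈ S.powerset with p Z, ∑ Y ∈ Icc Z S, (-1 : ℤ) ^ (#Y - #Z) • f Z := by
        refine sum_comm' fun Y Z ↦ ?_
        simp only [mem_filter, mem_powerset, mem_Icc]
        exact ⟨fun ⟨⟨hYS, _⟩, hZY, hZ⟩ ↦ ⟨⟨hZY, hYS⟩, hZY.trans hYS, hZ⟩,
          fun ⟨⟨hZY, hYS⟩, _, hZ⟩ ↦ ⟨⟨hYS, hp hZY hZ⟩, hZY, hZ⟩⟩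
    _ = ∑ Z ∈ S.powerset with p Z, if Z = S then f Z else 0 := sum_congr rfl fun Z hZ ↦ by
        rw [← sum_smul, sum_Icc_neg_one_pow_card_sub (mem_powerset.1 (mem_filter.1 hZ).1), ite_smul,
          one_smul, zero_smul]
    _ = if p S then f S else 0 := by
        simp only [sum_ite_eq', mem_filter, mem_powerset_self, true_and]

lemma sum_sum_powerset_inter_filter [DecidableEq α] (s : Finset ι) (t : ι → Finset α)
    (X : Finset α) (p : Finset α → Prop) [DecidablePred p] (c : Finset α → M) :
    ∑ i ∈ s, ∑ Y ∈ (t i ∩ X).powerset with p Y, c Y =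
      ∑ Y ∈ X.powerset with p Y, #{i ∈ s | Y ⊆ t i} • c Y := by
  simp only [← sum_const]
  refine sum_comm' fun i Y ↦ ?_
  simp only [mem_filter, mem_powerset, subset_inter_iff]
  tauto

theorem private_weight_checker_verification_general [DecidableEq α] (s : Finset ι)
    (t : ι → Finset α) (f : Finset α → G) (X : Finset α) :
    ∑ i ∈ s with (t i ∩ X).Nonempty, f (t i ∩ X) =
      ∑ Y ∈ X.powerset with Y.Nonempty,
        #{i ∈ s | Y ⊆ t i} • ∑ Z ∈ Y.powerset with Z.Nonempty, (-1 : ℤ) ^ (#Y - #Z) • f Z := by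
  have nonempty_mono : Monotone (Finset.Nonempty (α := α)) := fun _ _ h hZ ↦ hZ.mono h
  rw [sum_filter, ← sum_sum_powerset_inter_filter]
  exact sum_congr rfl fun i _ ↦ (moebius_inversion_powerset_filter nonempty_mono f (t i ∩ X)).symm

end

/-- **Private-weight checker verification for deterministic FI mining.**
Each transaction `t i` is virtually replicated with weight `∏_{x ∈ t i ∩ X} w x`; the
weighted count checker of the nonempty checkset `X ⊆ I` on the transformed database equals
`Σ_{∅ ≠ Y ⊆ X} ( Σ_{∅ ≠ Z ⊆ Y} (−1)^{|Y|−|Z|} ∏_{z∈Z} w z ) · sup(Y)` computed from the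
original supports `sup(Y) = #{i : Y ⊆ t i}`. -/
theorem private_weight_checker_verification
    {α : Type*} [DecidableEq α] (n : ℕ) (I : Finset α)
    (t : Fin n → Finset α) (ht : ∀ i, t i ⊆ I)
    (w : α → ℝ)
    (X : Finset α) (hXI : X ⊆ I) (hX : X.Nonempty) :
    ∑ i ∈ Finset.univ.filter (fun i : Fin n => (t i ∩ X).Nonempty),
        ∏ x ∈ t i ∩ X, w x =
      ∑ Y ∈ X.powerset.filter (fun Y => Y.Nonempty),
        (∑ Z ∈ Y.powerset.filter (fun Z => Z.Nonempty),
            (-1 : ℝ) ^ (Y.card - Z.card) * ∏ z ∈ Z, w z) *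
          ((Finset.univ.filter (fun i : Fin n => Y ⊆ t i)).card : ℝ) := by
  simpa only [zsmul_eq_mul, nsmul_eq_mul, Int.cast_pow, Int.cast_neg, Int.cast_one, mul_comm] using
    private_weight_checker_verification_general Finset.univ t (fun Z ↦ ∏ z ∈ Z, w z) X
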